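/- If ‖A‖₂ < 1, where ‖·‖₂ is the spectral norm, then every orbit of the clipped shallow PLRNN z_t = A·z_{t−1} + W_1·[φ(W_2·z_{t−1} + h_2) − φ(W_2·z_{t−1})] + h_1 is bounded; moreover, setting h̄_max := √L · max_l |(h_2)_l|, every orbit satisfies limsup_{T→∞} ‖z_T‖₂ ≤ (h̄_max·‖W_1‖₂ + ‖h_1‖₂) / (1 − ‖A‖₂) < ∞. -/

import Mathlib

/-- The spectral (operator 2-) norm of a real matrix: the operator norm of the
associated linear map between Euclidean spaces. -/
noncomputable def spec {m n : ℕ} (A : Matrix (Fin m) (Fin n) ℝ) : ℝ :=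
  ‖LinearMap.toContinuousLinearMap (Matrix.toEuclideanLin A)‖

/-- The Euclidean (2-) norm of a real vector. -/
noncomputable def eunorm {n : ℕ} (v : Fin n → ℝ) : ℝ :=
  ‖(EuclideanSpace.equiv (Fin n) ℝ).symm v‖

/-- Componentwise ReLU nonlinearity `φ(x) = max(0, x)`. -/
def relu {n : ℕ} (v : Fin n → ℝ) : Fin n → ℝ := fun i => max 0 (v i)

theorem eunorm_add_le {n : ℕ} (v w : Fin n → ℝ) : eunorm (v + w) ≤ eunorm v + eunorm w := by
  unfold eunorm
  rw [map_add]
  exact norm_add_le _ _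

theorem eunorm_mulVec_le {m n : ℕ} (A : Matrix (Fin m) (Fin n) ℝ) (v : Fin n → ℝ) :
    eunorm (A.mulVec v) ≤ spec A * eunorm v := by
  exact (LinearMap.toContinuousLinearMap (Matrix.toEuclideanLin A)).le_opNorm
    ((EuclideanSpace.equiv (Fin n) ℝ).symm v)

theorem eunorm_le_sqrt {n : ℕ} (v : Fin n → ℝ) (c : ℝ) (hc : 0 ≤ c) (h : ∀ i, |v i| ≤ c) :
    eunorm v ≤ Real.sqrt n * c := by
  have h0 : eunorm v = Real.sqrt (∑ i, ‖v i‖ ^ 2) := EuclideanSpace.norm_eq _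
  rw [h0]
  apply Real.sqrt_le_iff.mpr
  refine ⟨by positivity, ?_⟩
  rw [mul_pow, Real.sq_sqrt (Nat.cast_nonneg n)]
  calc ∑ i, ‖v i‖ ^ 2 ≤ ∑ _i : Fin n, c ^ 2 := by
        apply Finset.sum_le_sum
        intro i _
        exact pow_le_pow_left₀ (norm_nonneg _) (h i) 2
    _ = n * c ^ 2 := by simp

/-- If `‖A‖₂ < 1`, then every orbit of the clipped shallow PLRNN
`z_t = A z_{t-1} + W₁ [φ(W₂ z_{t-1} + h₂) - φ(W₂ z_{t-1})] + h₁` is bounded; moreover,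
with `h̄_max = √L · max_l |(h₂)_l|`,
`limsup_{T→∞} ‖z_T‖₂ ≤ (h̄_max ‖W₁‖₂ + ‖h₁‖₂) / (1 - ‖A‖₂)`. -/
theorem clipped_shPLRNN_orbit_bounded {M L : ℕ} (hL : 0 < L)
    (A : Matrix (Fin M) (Fin M) ℝ) (W1 : Matrix (Fin M) (Fin L) ℝ)
    (W2 : Matrix (Fin L) (Fin M) ℝ) (h2 : Fin L → ℝ) (h1 : Fin M → ℝ)
    (hA : spec A < 1)
    (z : ℕ → Fin M → ℝ)
    (hz : ∀ t,
      z (t + 1) = A.mulVec (z t)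
        + W1.mulVec (relu (W2.mulVec (z t) + h2) - relu (W2.mulVec (z t))) + h1) :
    (∃ C : ℝ, ∀ T, eunorm (z T) ≤ C)
    ∧ Filter.limsup (fun T => eunorm (z T)) Filter.atTop
        ≤ ((Real.sqrt L * Finset.univ.sup' ⟨⟨0, hL⟩, Finset.mem_univ _⟩ (fun l => |h2 l|))
              * spec W1 + eunorm h1) / (1 - spec A) := by
  have ha0 : 0 ≤ spec A := norm_nonneg _
  have hw0 : 0 ≤ spec W1 := norm_nonneg _
  have hx0 : ∀ T, 0 ≤ eunorm (z T) := fun T => norm_nonneg _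
  have hh0 : 0 ≤ eunorm h1 := norm_nonneg _
  set c := Finset.univ.sup' ⟨⟨0, hL⟩, Finset.mem_univ _⟩ (fun l => |h2 l|) with hc
  have hcl : ∀ l, |h2 l| ≤ c := fun l =>
    Finset.le_sup' (fun l => |h2 l|) (Finset.mem_univ l)
  have hc0 : 0 ≤ c := (abs_nonneg _).trans (hcl ⟨0, hL⟩)
  set B := (Real.sqrt L * c) * spec W1 + eunorm h1 with hB
  have hstep : ∀ t, eunorm (z (t + 1)) ≤ spec A * eunorm (z t) + B := by
    intro t
    rw [hz t]
    have h3 : eunorm (relu (W2.mulVec (z t) + h2) - relu (W2.mulVec (z t))) ≤ Real.sqrt L * c := by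
      apply eunorm_le_sqrt _ _ hc0
      intro i
      refine le_trans ?_ (hcl i)
      have := abs_max_sub_max_le_abs (W2.mulVec (z t) i + h2 i) (W2.mulVec (z t) i) 0
      simpa [relu, max_comm] using this
    have h4 := eunorm_mulVec_le W1 (relu (W2.mulVec (z t) + h2) - relu (W2.mulVec (z t)))
    have h5 := mul_le_mul_of_nonneg_left h3 hw0
    have h6 := eunorm_mulVec_le A (z t)
    refine (eunorm_add_le _ _).trans ?_
    have h7 := eunorm_add_le (A.mulVec (z t))
      (W1.mulVec (relu (W2.mulVec (z t) + h2) - relu (W2.mulVec (z t))))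
    rw [hB]
    linarith
  have h1a : 0 < 1 - spec A := by linarith
  have hB0 : 0 ≤ B := by positivity
  set K := B / (1 - spec A) with hK
  have hK0 : 0 ≤ K := by positivity
  have hKB : K = spec A * K + B := by
    rw [hK]; field_simp; ring
  have hb : ∀ T, eunorm (z T) ≤ spec A ^ T * eunorm (z 0) + K := by
    intro T
    induction T with
    | zero => simpa using hK0
    | succ t ih =>
      have := mul_le_mul_of_nonneg_left ih ha0
      calc _ ≤ _ := hstep t
        _ ≤ spec A * (spec A ^ t * eunorm (z 0) + K) + B := by linarith
        _ = spec A ^ (t + 1) * eunorm (z 0) + (spec A * K + B) := by ring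
        _ = _ := by rw [← hKB]
  have hlim : Filter.Tendsto (fun T : ℕ => spec A ^ T * eunorm (z 0) + K) Filter.atTop
      (nhds K) := by
    simpa using ((tendsto_pow_atTop_nhds_zero_of_lt_one ha0 hA).mul_const
      (eunorm (z 0))).add_const K
  refine ⟨⟨eunorm (z 0) + K, fun T => (hb T).trans ?_⟩, ?_⟩
  · have := mul_le_mul_of_nonneg_right (pow_le_one₀ (n := T) ha0 hA.le) (hx0 0)
    linarith
  · rw [← hlim.limsup_eq]
    exact Filter.limsup_le_limsup (Filter.Eventually.of_forall hb)
      (Filter.isCoboundedUnder_le_of_le Filter.atTop hx0) hlim.isBoundedUnder_le
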